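/- (Correctness of the multiparty FFT_D∘FFT_S^{-1} algorithm.) Let a ∈ F^n with n = K·m, let v_{K+1},...,v_{K+T} ∈ F^m be arbitrary, and let u(z) be the F^m-valued Lagrange sharing polynomial with u(β_j) = a^{(j)} for j ≤ K and u(β_j) = v_j for K < j ≤ K+T. For each θ ∈ {1,...,N} define x_j^{(θ)} ∈ F^m by x_{j,t}^{(θ)} = ( (1/K) Σ_{l=1}^{K} ω^{−(Kt+j−1)(l−1)} · FFT_{S'}^{-1}(u(α_θ)) · ∏_{k=1,k≠θ}^{N} (β_l − α_k)/(α_θ − α_k) )_{(Kt+j−1) mod m}; let v_j^{(θ)} ∈ F^m (j ∈ {K+1,...,K+T}) be arbitrary and u^{(θ)}(z) the Lagrange sharing polynomial with u^{(θ)}(β_j) = x_j^{(θ)} for j ≤ K and u^{(θ)}(β_j) = v_j^{(θ)} for j > K; let u_θ = Σ_{γ=1}^{N} u^{(γ)}(α_θ); let w_θ ∈ F^m with (w_θ)_r = Σ_{t=0}^{m−1} (u_θ)_t · (η^K ω^{Kr})^t; and let u_p(z) = Σ_{θ=1}^{N} w_θ · ∏_{k=1,k≠θ}^{N} (z − α_k)/(α_θ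 − α_k). Then for every i ∈ {0,...,n−1}: Σ_{j=1}^{K} (ω^i η)^{j−1} · (u_p(β_j))_{i mod m} = (FFT_D(FFT_S^{-1}(a)))_i = Σ_{μ=0}^{n−1} (FFT_S^{-1}(a))_μ · (ηω^i)^μ. -/

import Mathlib

/-- The index `K*t + j` (stride-`K` subsampling) as an element of `Fin n` when `n = K*m`. -/
def strideIx {n : ℕ} (K m : ℕ) (hnKm : n = K * m) (t : Fin m) (j : Fin K) : Fin n :=
  ⟨K * (t : ℕ) + (j : ℕ), by
    have ht := t.isLt
    have hj := j.isLt
    subst hnKm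
    calc K * (t : ℕ) + (j : ℕ) < K * (t : ℕ) + K := by omega
      _ = K * ((t : ℕ) + 1) := by ring
      _ ≤ K * m := Nat.mul_le_mul_left K (by omega)⟩

/-!
A linear map applied to every share of a vector produces shares of its image, so interpolation
through the servers' outputs yields the image of the shared data (`lagrangeEval_map_lagrangeEval`).
Both rounds of the protocol apply this to the linear map "evaluate at a point the polynomial with
given coefficients", and both transforms are such evaluations: `FFT_S⁻¹` at the points `ω^{-i}`,
`FFT_D` at the points `ηω^i`. The stride-`K` partitions enter through
`b(z) = ∑_j z^j b^{(j)}(z^K)`. At `z = ω^{-i}` or `z = ηω^i` the inner point `z^K` depends only on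
`i mod m`, which is why transforms of length `m` suffice.
-/

/-- The stride-`K` partition `a^{(j)}` of `a`, with `j` counted from `0`. -/
def stridePartition {R : Type*} {n K m : ℕ} (h : n = K * m) (a : Fin n → R) (j : Fin K) :
    Fin m → R :=
  fun t => a (strideIx K m h t j)

open Finset in
theorem sum_eq_sum_strideIx {M : Type*} [AddCommMonoid M] {n K m : ℕ} (h : n = K * m)
    (f : Fin n → M) : ∑ μ, f μ = ∑ j : Fin K, ∑ t : Fin m, f (strideIx K m h t j) := by
  subst h
  rw [← (finProdFinEquiv.trans (finCongr (mul_comm m K))).sum_comp, Fintype.sum_prod_type_right]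
  refine sum_congr rfl fun j _ => sum_congr rfl fun t _ => congrArg f (Fin.ext ?_)
  simp [strideIx, add_comm]

section EvalCoeffs

open Finset

variable {R : Type*} [CommSemiring R] {n : ℕ}

/-- Evaluation at `z` of the polynomial with coefficient vector `b`, as a linear function of `b`.
Every Fourier transform of the paper has this shape: `FFT_D(b)_i` is the value at `ηω^i` and
`n · FFT_S⁻¹(b)_i` is the value at `ω^{-i}`. -/
def evalCoeffs (z : R) : (Fin n → R) →ₗ[R] R :=
  Fintype.linearCombination R fun i : Fin n => z ^ (i : ℕ)

theorem evalCoeffs_apply (z : R) (b : Fin n → R) :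
    evalCoeffs z b = ∑ i : Fin n, z ^ (i : ℕ) * b i := by
  simp only [evalCoeffs, Fintype.linearCombination_apply, smul_eq_mul, mul_comm]

theorem evalCoeffs_eq_sum_stridePartition {K m : ℕ} (h : n = K * m) (z : R) (b : Fin n → R) :
    evalCoeffs z b =
      ∑ j : Fin K, z ^ (j : ℕ) * evalCoeffs (z ^ K) (stridePartition h b j) := by
  simp only [evalCoeffs_apply, sum_eq_sum_strideIx h, mul_sum]
  refine sum_congr rfl fun j _ => sum_congr rfl fun t _ => ?_
  simp only [stridePartition, strideIx, pow_add, pow_mul]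
  ring

end EvalCoeffs

section LagrangeEval

open Finset Polynomial

theorem eval_lagrangeBasis_eq_prod_div {F ι : Type*} [Field F] [DecidableEq ι]
    (s : Finset ι) (w : ι → F) (j : ι) (z : F) :
    (Lagrange.basis s w j).eval z = ∏ k ∈ s.erase j, (z - w k) / (w j - w k) := by
  simp only [Lagrange.basis, Lagrange.basisDivisor, eval_prod, eval_mul, eval_C, eval_sub, eval_X,
    div_eq_inv_mul]

variable {F ι κ V W : Type*} [Field F] [Fintype ι] [DecidableEq ι] [Fintype κ] [DecidableEq κ]
  [AddCommMonoid V] [Module F V] [AddCommMonoid W] [Module F W]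

theorem sum_eval_lagrangeBasis_mul_eval {α : ι → F} (hα : Function.Injective α) {p : F[X]}
    (hp : p.degree < Fintype.card ι) (z : F) :
    ∑ θ, (Lagrange.basis univ α θ).eval z * p.eval (α θ) = p.eval z := by
  conv_rhs => rw [Lagrange.eq_interpolate hα.injOn hp, Lagrange.interpolate_apply]
  simp [eval_finsetSum, mul_comm]

/-- The value at `z` of the Lagrange polynomial with values `s j` at the nodes `w j`, as a linear
function of `s`. The values lie in an arbitrary `F`-module, so that vectors can be shared. -/
noncomputable def lagrangeEval (w : ι → F) (z : F) : (ι → V) →ₗ[F] V :=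
  ∑ j, (Lagrange.basis univ w j).eval z • LinearMap.proj j

theorem lagrangeEval_apply (w : ι → F) (z : F) (s : ι → V) :
    lagrangeEval w z s = ∑ j, (Lagrange.basis univ w j).eval z • s j := by
  simp [lagrangeEval]

theorem lagrangeEval_append {K T : ℕ} (w : Fin (K + T) → F) (z : F) (p : Fin K → V)
    (q : Fin T → V) :
    lagrangeEval w z (Fin.append p q) =
      (∑ j, (∏ k ∈ univ.erase (Fin.castAdd T j),
        (z - w k) / (w (Fin.castAdd T j) - w k)) • p j) +
      ∑ j, (∏ k ∈ univ.erase (Fin.natAdd K j),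
        (z - w k) / (w (Fin.natAdd K j) - w k)) • q j := by
  simp only [lagrangeEval_apply, Fin.sum_univ_add, Fin.append_left, Fin.append_right,
    eval_lagrangeBasis_eq_prod_div]

theorem map_lagrangeEval (φ : V →ₗ[F] W) (w : ι → F) (z : F) (s : ι → V) :
    φ (lagrangeEval w z s) = lagrangeEval w z fun j => φ (s j) := by
  simp only [lagrangeEval_apply, map_sum, map_smul]

theorem lagrangeEval_at_node {w : ι → F} (hw : Function.Injective w) (s : ι → V) (j : ι) :
    lagrangeEval w (w j) s = s j := by
  rw [lagrangeEval_apply, Fintype.sum_eq_single j fun k hk => by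
    rw [Lagrange.eval_basis_of_ne hk (mem_univ j), zero_smul],
    Lagrange.eval_basis_self hw.injOn (mem_univ j), one_smul]

theorem lagrangeEval_lagrangeEval {α : ι → F} {β : κ → F} (hα : Function.Injective α)
    (hβ : Function.Injective β) (hcard : Fintype.card κ ≤ Fintype.card ι) (s : κ → V) (z : F) :
    lagrangeEval α z (fun θ => lagrangeEval β (α θ) s) = lagrangeEval β z s := by
  have hdeg (j : κ) : (Lagrange.basis univ β j).degree < Fintype.card ι := by
    rw [Lagrange.degree_basis hβ.injOn (mem_univ j), card_univ, Nat.cast_lt]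
    have := Fintype.card_pos_iff.mpr ⟨j⟩
    omega
  simp only [lagrangeEval_apply, smul_sum, smul_smul]
  rw [sum_comm]
  simp only [← sum_smul, sum_eval_lagrangeBasis_mul_eval hα (hdeg _)]

theorem lagrangeEval_map_lagrangeEval {α : ι → F} {β : κ → F} (hα : Function.Injective α)
    (hβ : Function.Injective β) (hcard : Fintype.card κ ≤ Fintype.card ι) (φ : V →ₗ[F] W)
    (s : κ → V) (j : κ) :
    lagrangeEval α (β j) (fun θ => φ (lagrangeEval β (α θ) s)) = φ (s j) := by
  rw [← map_lagrangeEval, lagrangeEval_lagrangeEval hα hβ hcard, lagrangeEval_at_node hβ]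

end LagrangeEval

section Protocol

open Finset

variable {F ι κ : Type*} [Field F] [Fintype ι] [DecidableEq ι] [Fintype κ] [DecidableEq κ]
  {n K m : ℕ} {α : ι → F} {β : κ → F}

theorem sum_basis_mul_evalCoeffs_lagrangeEval (h : n = K * m) (hα : Function.Injective α)
    (hβ : Function.Injective β) (hcard : Fintype.card κ ≤ Fintype.card ι) {d : Fin K → κ}
    {a : Fin n → F} {s : κ → Fin m → F} (hs : ∀ j, s (d j) = stridePartition h a j) (z : F) :
    ∑ θ, ∑ l : Fin K, z ^ (l : ℕ) * (Lagrange.basis univ α θ).eval (β (d l)) *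
      evalCoeffs (z ^ K) (lagrangeEval β (α θ) s) = evalCoeffs z a := by
  rw [sum_comm, evalCoeffs_eq_sum_stridePartition h]
  refine sum_congr rfl fun l _ => ?_
  rw [← hs, ← lagrangeEval_map_lagrangeEval hα hβ hcard, lagrangeEval_apply, mul_sum]
  simp only [smul_eq_mul, mul_assoc]

/-- The slots of `κ` outside the range of `d` carry the random masks, and `c`, `c'` take the place
of the normalisations `1/K`, `1/m`. -/
theorem multiparty_fft_correctness_general (h : n = K * m) {ω : F} (hω : ω ^ n = 1) (η c c' : F)
    (hα : Function.Injective α) (hβ : Function.Injective β)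
    (hcard : Fintype.card κ ≤ Fintype.card ι) (d : Fin K → κ) (a : Fin n → F)
    (s : κ → Fin m → F) (hs : ∀ j, s (d j) = stridePartition h a j)
    (x : ι → κ → Fin m → F)
    (hx : ∀ θ j (t : Fin m), x θ (d j) t =
      c * ∑ l : Fin K, (ω⁻¹ ^ (K * (t : ℕ) + (j : ℕ))) ^ (l : ℕ) *
        (Lagrange.basis univ α θ).eval (β (d l)) *
        (c' * evalCoeffs ((ω⁻¹ ^ K) ^ ((K * (t : ℕ) + (j : ℕ)) % m)) (lagrangeEval β (α θ) s)))
    (i : ℕ) :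
    ∑ j : Fin K, (ω ^ i * η) ^ (j : ℕ) *
        lagrangeEval α (β (d j)) (fun θ =>
          evalCoeffs (η ^ K * (ω ^ K) ^ (i % m)) (∑ γ, lagrangeEval β (α θ) (x γ))) =
      evalCoeffs (η * ω ^ i) fun μ : Fin n => c * c' * evalCoeffs (ω⁻¹ ^ (μ : ℕ)) a := by
  have pow_mul_mod {ζ : F} (hζ : ζ ^ n = 1) (e : ℕ) : (ζ ^ K) ^ (e % m) = (ζ ^ e) ^ K := by
    rw [← pow_eq_pow_mod e (by rw [← pow_mul, ← h, hζ]), pow_right_comm]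
  have first_round (j : Fin K) : ∑ γ, x γ (d j) =
      stridePartition h (fun μ : Fin n => c * c' * evalCoeffs (ω⁻¹ ^ (μ : ℕ)) a) j := by
    ext t
    simp only [stridePartition, strideIx, Finset.sum_apply, hx,
      pow_mul_mod (show ω⁻¹ ^ n = 1 by rw [inv_pow, hω, inv_one]),
      ← sum_basis_mul_evalCoeffs_lagrangeEval h hα hβ hcard hs, mul_sum]
    exact sum_congr rfl fun γ _ => sum_congr rfl fun l _ => by ring
  have second_round (y : F) (j : Fin K) : lagrangeEval α (β (d j)) (fun θ =>
      evalCoeffs y (∑ γ, lagrangeEval β (α θ) (x γ))) = evalCoeffs y (∑ γ, x γ (d j)) := by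
    simp only [← map_sum, lagrangeEval_map_lagrangeEval hα hβ hcard, Finset.sum_apply]
  simp only [evalCoeffs_eq_sum_stridePartition h (η * ω ^ i), second_round, first_round,
    pow_mul_mod hω, mul_pow, mul_comm]

end Protocol

/-- Theorem 1 of the paper: correctness of the multiparty computation of
`FFT_D (FFT_S⁻¹ (a))`.  Here `ω` is a primitive `n`-th root of unity, `n = K·m`,
`η ∉ S = {1,ω,…,ω^{n-1}}`, `N = K + T`; `u` is the Lagrange sharing polynomial of the
stride-`K` partitions `a^{(j)}` of `a`; `x θ j` is the vector `x_j^{(θ)}` of (14);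
`uθf θ` is the Lagrange resharing polynomial `u^{(θ)}` with randomness `v' θ`;
`usum θ = u_θ = ∑_γ u^{(γ)}(α_θ)`; `w θ = FFT_{D'}(u_θ)`; and `u_p` is the decoding
polynomial (9).  The output `∑_j (ω^i η)^{j-1} (u_p(β_j))_{i mod m}` equals
`(FFT_D(FFT_S⁻¹(a)))_i = ∑_μ (FFT_S⁻¹(a))_μ (ηω^i)^μ`. -/
theorem multiparty_fft_correctness
    {F : Type*} [Field F] (n K T m : ℕ) (hn : 0 < n) (hK : 0 < K) (hT : 0 < T) (hm : 0 < m)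
    (hnKm : n = K * m)
    (ω : F) (hω1 : ω ^ n = 1) (hωprim : ∀ m', 0 < m' → m' < n → ω ^ m' ≠ 1)
    (η : F) (hη : ∀ i : Fin n, η ≠ ω ^ (i : ℕ))
    (β : Fin (K + T) → F) (α : Fin (K + T) → F)
    (hβ : Function.Injective β) (hα : Function.Injective α)
    (hαβ : ∀ i j, α i ≠ β j)
    (a : Fin n → F) (v : Fin T → Fin m → F)
    (u : F → Fin m → F)
    (hu : ∀ z, u z =
      (∑ j : Fin K, (∏ k ∈ Finset.univ.erase (Fin.castAdd T j),
          (z - β k) / (β (Fin.castAdd T j) - β k)) •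
            (fun t : Fin m => a (strideIx K m hnKm t j))) +
      (∑ j : Fin T, (∏ k ∈ Finset.univ.erase (Fin.natAdd K j),
          (z - β k) / (β (Fin.natAdd K j) - β k)) • v j))
    (x : Fin (K + T) → Fin K → Fin m → F)
    (hx : ∀ (θ : Fin (K + T)) (j : Fin K) (t : Fin m), x θ j t =
      (K : F)⁻¹ * ∑ l : Fin K,
        ω⁻¹ ^ ((K * (t : ℕ) + (j : ℕ)) * (l : ℕ)) *
        (∏ k ∈ Finset.univ.erase θ, (β (Fin.castAdd T l) - α k) / (α θ - α k)) *
        ((m : F)⁻¹ * ∑ t' : Fin m,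
          ω⁻¹ ^ (K * ((K * (t : ℕ) + (j : ℕ)) % m) * (t' : ℕ)) * u (α θ) t'))
    (v' : Fin (K + T) → Fin T → Fin m → F)
    (uθf : Fin (K + T) → F → Fin m → F)
    (huθf : ∀ (θ : Fin (K + T)) (z : F), uθf θ z =
      (∑ j : Fin K, (∏ k ∈ Finset.univ.erase (Fin.castAdd T j),
          (z - β k) / (β (Fin.castAdd T j) - β k)) • x θ j) +
      (∑ j : Fin T, (∏ k ∈ Finset.univ.erase (Fin.natAdd K j),
          (z - β k) / (β (Fin.natAdd K j) - β k)) • v' θ j))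
    (usum : Fin (K + T) → Fin m → F)
    (husum : ∀ θ : Fin (K + T), usum θ = ∑ γ : Fin (K + T), uθf γ (α θ))
    (w : Fin (K + T) → Fin m → F)
    (hw : ∀ (θ : Fin (K + T)) (r : Fin m),
      w θ r = ∑ t : Fin m, usum θ t * (η ^ K * ω ^ (K * (r : ℕ))) ^ (t : ℕ))
    (up : F → Fin m → F)
    (hup : ∀ z, up z = ∑ θ : Fin (K + T),
      (∏ k ∈ Finset.univ.erase θ, (z - α k) / (α θ - α k)) • w θ)
    (i : Fin n) :
    ∑ j : Fin K, (ω ^ (i : ℕ) * η) ^ (j : ℕ) *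
        up (β (Fin.castAdd T j)) ⟨(i : ℕ) % m, Nat.mod_lt _ hm⟩ =
      ∑ μ : Fin n, ((n : F)⁻¹ * ∑ ν : Fin n, ω⁻¹ ^ ((μ : ℕ) * (ν : ℕ)) * a ν) *
        (η * ω ^ (i : ℕ)) ^ (μ : ℕ) := by
  have share_u (z : F) : u z = lagrangeEval β z (Fin.append (stridePartition hnKm a) v) :=
    (hu z).trans (lagrangeEval_append β z _ v).symm
  have share_x (θ : Fin (K + T)) (z : F) :
      uθf θ z = lagrangeEval β z (Fin.append (x θ) (v' θ)) :=
    (huθf θ z).trans (lagrangeEval_append β z _ _).symm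
  have key := multiparty_fft_correctness_general hnKm hω1 η (K : F)⁻¹ (m : F)⁻¹ hα hβ le_rfl
    (Fin.castAdd T) a _ (Fin.append_left (stridePartition hnKm a) v)
    (fun θ => Fin.append (x θ) (v' θ)) (fun θ j t => by
      simp only [Fin.append_left, hx, pow_mul, ← share_u, evalCoeffs_apply,
        eval_lagrangeBasis_eq_prod_div]) i
  simpa only [← share_x, ← husum, hup, hw, Finset.sum_apply, Pi.smul_apply, smul_eq_mul,
    evalCoeffs_apply, lagrangeEval_apply, eval_lagrangeBasis_eq_prod_div, pow_mul, hnKm,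
    Nat.cast_mul, mul_inv, mul_comm] using key
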